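/- (Theorem 1, main part.) Let z(t) = (x(t), y(t)), t ∈ I, be a geodesic of the Kaluza–Klein metric g̃ with g̃_{AB}(z) ż^A ż^B = ε where ε ∈ {−1, 0, 1}, and let r := −β a(x(t))² (ẏ + β A_μ(x) ẋ^μ) be its conserved charge. Assume ε + r²/(β² a(x(t))²) > 0 for all t ∈ I and set Ω_r(x) := (ε + r²/(β² a(x)²))^{1/2} and g_r := Ω_r² g₀ (so g_r^{λα} = Ω_r^{−2} g₀^{λα}). Let τ : I → ℝ be the strictly increasing reparametrization with dτ/dt = Ω_r(x(t))², and let x̃(τ) denote x reparametrized by τ. Then x̃ satisfies the Lorentz force equation d²x̃^λ/dτ² + Γ[g_r]^λ_{μν} (dx̃^μ/dτ)(dx̃^ν/dτ) = r g_r^{λα} F_{αν} dx̃^ν/dτ for every λ, together with the normalization g_{r,μν} (dx̃^μ/dτ)(dx̃^ν/dτ) = 1. -/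

import Mathlib

open scoped BigOperators

/-- Partial derivative in the μ-th coordinate direction. -/
noncomputable def pd {ι : Type*} [Fintype ι] [DecidableEq ι] {F : Type*}
    [NormedAddCommGroup F] [NormedSpace ℝ F]
    (f : (ι → ℝ) → F) (μ : ι) (x : ι → ℝ) : F :=
  fderiv ℝ f x (Pi.single μ 1)

/-- Christoffel symbols Γ[h]^l_{μν} of a matrix field `h`. -/
noncomputable def Chr {ι : Type*} [Fintype ι] [DecidableEq ι]
    (h : (ι → ℝ) → Matrix ι ι ℝ) (l μ ν : ι) (x : ι → ℝ) : ℝ :=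
  (1/2) * ∑ ρ : ι, (h x)⁻¹ l ρ *
    (pd (fun z => h z ρ ν) μ x + pd (fun z => h z ρ μ) ν x - pd (fun z => h z μ ν) ρ x)

/-- A curve `z` is a geodesic of the metric `h` on the parameter set `I`. -/
def IsGeodesicOn {ι : Type*} [Fintype ι] [DecidableEq ι]
    (h : (ι → ℝ) → Matrix ι ι ℝ) (z : ℝ → ι → ℝ) (I : Set ℝ) : Prop :=
  ∀ t ∈ I, ∀ A : ι,
    deriv (fun s => deriv (fun u => z u A) s) t
      + ∑ B : ι, ∑ C : ι, Chr h A B C (z t)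
          * deriv (fun u => z u B) t * deriv (fun u => z u C) t = 0

/-- Index type of ℝ⁵ = ℝ⁴ × ℝ : the four spacetime directions plus the fibre direction `y`. -/
abbrev K5 := Sum (Fin 4) Unit

/-- Projection ℝ⁵ → ℝ⁴. -/
def projx (p : K5 → ℝ) : Fin 4 → ℝ := fun μ => p (Sum.inl μ)

/-- The Kaluza–Klein metric matrix built from `g`, `A`, `a`, conformal factor `Ω` and `β`:
`g̃_{μν} = Ω⁻²g_{μν} − a²β²A_μA_ν`, `g̃_{μy} = −a²βA_μ`, `g̃_{yy} = −a²`. -/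
noncomputable def KK (g : (Fin 4 → ℝ) → Matrix (Fin 4) (Fin 4) ℝ)
    (A : (Fin 4 → ℝ) → Fin 4 → ℝ) (a Ω : (Fin 4 → ℝ) → ℝ) (β : ℝ)
    (x : Fin 4 → ℝ) : Matrix K5 K5 ℝ :=
  Matrix.of fun i j =>
    match i, j with
    | Sum.inl μ, Sum.inl ν => ((Ω x)^2)⁻¹ * g x μ ν - (a x)^2 * β^2 * A x μ * A x ν
    | Sum.inl μ, Sum.inr _ => -((a x)^2) * β * A x μ
    | Sum.inr _, Sum.inl ν => -((a x)^2) * β * A x ν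
    | Sum.inr _, Sum.inr _ => -((a x)^2)

/-- The Kaluza–Klein metric as a (y-independent) field on ℝ⁵. -/
noncomputable def KKfield (g : (Fin 4 → ℝ) → Matrix (Fin 4) (Fin 4) ℝ)
    (A : (Fin 4 → ℝ) → Fin 4 → ℝ) (a Ω : (Fin 4 → ℝ) → ℝ) (β : ℝ) :
    (K5 → ℝ) → Matrix K5 K5 ℝ :=
  fun p => KK g A a Ω β (projx p)

/-- The quantity Q(t) = a(x(t))² (ẏ(t) + β A_μ(x(t)) ẋ^μ(t)) along a curve in ℝ⁵. -/
noncomputable def Qcharge (a : (Fin 4 → ℝ) → ℝ) (A : (Fin 4 → ℝ) → Fin 4 → ℝ)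
    (β : ℝ) (z : ℝ → K5 → ℝ) (t : ℝ) : ℝ :=
  (a (projx (z t)))^2 * (deriv (fun u => z u (Sum.inr ())) t
    + β * ∑ μ : Fin 4, A (projx (z t)) μ * deriv (fun u => z u (Sum.inl μ)) t)

/-- Electromagnetic field tensor F_{μν} = ∂_μ A_ν − ∂_ν A_μ. -/
noncomputable def Fem (A : (Fin 4 → ℝ) → Fin 4 → ℝ) (μ ν : Fin 4) (x : Fin 4 → ℝ) : ℝ :=
  pd (fun z => A z ν) μ x - pd (fun z => A z μ) ν x

/-- The conformal factor Ω_r(x) = (ε + r²/(β²a(x)²))^{1/2}. -/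
noncomputable def Omr (a : (Fin 4 → ℝ) → ℝ) (β ε r : ℝ) (x : Fin 4 → ℝ) : ℝ :=
  Real.sqrt (ε + r^2 / (β^2 * (a x)^2))

/-- The conformally rescaled metric g_r = Ω_r² g₀. -/
noncomputable def grmet (g₀ : (Fin 4 → ℝ) → Matrix (Fin 4) (Fin 4) ℝ)
    (a : (Fin 4 → ℝ) → ℝ) (β ε r : ℝ) (x : Fin 4 → ℝ) : Matrix (Fin 4) (Fin 4) ℝ :=
  (Omr a β ε r x)^2 • g₀ x

/-!
Write the Kaluza–Klein metric as `g̃ = g₀ - a² θ ⊗ θ` with `θ = β A + dy`. Along a geodesic of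
charge `r` the spatial components of the momentum `g̃ ż` are `g₀ ẋ + r A`, so the lowered geodesic
equation says that the Euler–Lagrange covector of `g₀` along `x` is the Lorentz force `r F ẋ` plus
`½ dΦ`, where `Φ = Ω_r²`; the normalization says `g₀(ẋ, ẋ) = Φ`. By the Jacobi–Maupertuis principle,
passing to the metric `Φ g₀` and to the time `Φ dt` cancels the potential term `½ dΦ` and multiplies
the remaining force covector by `Φ⁻¹`, which turns `r F ẋ` into `r F dx/dτ`.
-/

section Reparametrization

open scoped Topology

variable {𝕜 E : Type*} [NontriviallyNormedField 𝕜] [CompleteSpace 𝕜]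
  [NormedAddCommGroup E] [NormedSpace 𝕜 E]

theorem hasDerivAt_of_comp_eventuallyEq {F f : 𝕜 → E} {f' : E} {τ : 𝕜 → 𝕜} {c t : 𝕜}
    (hτ : HasStrictDerivAt τ c t) (hc : c ≠ 0) (hF : F ∘ τ =ᶠ[𝓝 t] f)
    (hf : HasDerivAt f f' t) : HasDerivAt F (c⁻¹ • f') (τ t) := by
  have hinv : ∀ᶠ s in 𝓝 t, hτ.localInverse τ c t hc (τ s) = s :=
    (hτ.hasStrictFDerivAt_equiv hc).eventually_left_inverse
  have hF' : F =ᶠ[𝓝 (τ t)] f ∘ hτ.localInverse τ c t hc := by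
    rw [← hτ.map_nhds_eq hc, Filter.EventuallyEq, Filter.eventually_map]
    filter_upwards [hF, hinv] with s hs hs'
    rw [Function.comp_apply, hs', ← hs, Function.comp_apply]
  refine HasDerivAt.congr_of_eventuallyEq ?_ hF'
  exact HasDerivAt.scomp (τ t) (hinv.self_of_nhds.symm ▸ hf) (hτ.to_localInverse hc).hasDerivAt

end Reparametrization

section PartialDerivatives

open scoped Topology

variable {ι F : Type*} [Fintype ι] [DecidableEq ι] [NormedAddCommGroup F] [NormedSpace ℝ F]
  {x : ι → ℝ}

theorem hasDerivAt_line_pd {f : (ι → ℝ) → F} (hf : DifferentiableAt ℝ f x) (μ : ι) :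
    HasDerivAt (fun s : ℝ => f (x + s • Pi.single μ 1)) (pd f μ x) 0 :=
  hf.hasFDerivAt.hasLineDerivAt _

theorem pd_congr_of_eventuallyEq {f g : (ι → ℝ) → F} (h : f =ᶠ[𝓝 x] g) (μ : ι) :
    pd f μ x = pd g μ x := by
  simp only [pd, h.fderiv_eq]

theorem fderiv_apply_eq_sum_pd (f : (ι → ℝ) → F) (v : ι → ℝ) :
    fderiv ℝ f x v = ∑ μ, v μ • pd f μ x := by
  conv_lhs => rw [pi_eq_sum_univ' v, map_sum]
  simp [pd]

theorem pd_mul {f g : (ι → ℝ) → ℝ} (hf : DifferentiableAt ℝ f x)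
    (hg : DifferentiableAt ℝ g x) (μ : ι) :
    pd (fun y => f y * g y) μ x = pd f μ x * g x + f x * pd g μ x := by
  simp only [pd, fderiv_fun_mul hf hg, _root_.add_apply, _root_.smul_apply,
    smul_eq_mul]
  ring

theorem hasDerivAt_comp_curve {f : (ι → ℝ) → F} {z : ℝ → ι → ℝ} {v : ι → ℝ} {t : ℝ}
    (hf : DifferentiableAt ℝ f (z t)) (hz : HasDerivAt z v t) :
    HasDerivAt (fun s => f (z s)) (∑ μ, v μ • pd f μ (z t)) t :=
  fderiv_apply_eq_sum_pd f v ▸ hf.hasFDerivAt.comp_hasDerivAt t hz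

end PartialDerivatives

section MetricFields

open scoped Matrix Topology

theorem dotProduct_mulVec_eq_sum {ι : Type*} [Fintype ι] (M : Matrix ι ι ℝ) (v : ι → ℝ) :
    v ⬝ᵥ M *ᵥ v = ∑ B, ∑ C, M B C * v B * v C := by
  simp only [dotProduct, Matrix.mulVec, Finset.mul_sum]
  exact Finset.sum_congr rfl fun B _ => Finset.sum_congr rfl fun C _ => by ring

variable {ι : Type*} [Fintype ι] [DecidableEq ι] {h : (ι → ℝ) → Matrix ι ι ℝ} {x : ι → ℝ}

/-- The matrix `∂_D h` of partial derivatives of the entries of a matrix field `h`. -/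
noncomputable def metricDeriv (h : (ι → ℝ) → Matrix ι ι ℝ) (D : ι) (x : ι → ℝ) :
    Matrix ι ι ℝ :=
  Matrix.of fun B C => pd (fun y => h y B C) D x

/-- The acceleration covector `d/dt (∂L/∂v) - ∂L/∂x` of the Lagrangian `L = ½ h_{BC} v^B v^C` of
a symmetric matrix field `h`, as a function of position `x`, velocity `v` and coordinate
acceleration `w`. -/
noncomputable def eulerLagrange (h : (ι → ℝ) → Matrix ι ι ℝ) (x v w : ι → ℝ) (D : ι) : ℝ :=
  (h x *ᵥ w) D + ∑ B, v B * (metricDeriv h B x *ᵥ v) D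
    - 1 / 2 * (v ⬝ᵥ metricDeriv h D x *ᵥ v)

/-- The covariant acceleration `w^l + Γ[h]^l_{BC} v^B v^C` at position `x`, velocity `v` and
coordinate acceleration `w`. -/
noncomputable def covAccel (h : (ι → ℝ) → Matrix ι ι ℝ) (x v w : ι → ℝ) (l : ι) : ℝ :=
  w l + ∑ B, ∑ C, Chr h l B C x * v B * v C

theorem sum_Chr_mul_mul (h : (ι → ℝ) → Matrix ι ι ℝ) (x v : ι → ℝ) :
    (fun l => ∑ B, ∑ C, Chr h l B C x * v B * v C) =
      (h x)⁻¹ *ᵥ fun D => ∑ B, v B * (metricDeriv h B x *ᵥ v) D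
        - 1 / 2 * (v ⬝ᵥ metricDeriv h D x *ᵥ v) := by
  have hswap (D : ι) : ∑ B, ∑ C, metricDeriv h C x D B * v B * v C =
      ∑ B, ∑ C, metricDeriv h B x D C * v B * v C := by
    rw [Finset.sum_comm]
    exact Finset.sum_congr rfl fun B _ => Finset.sum_congr rfl fun C _ => by ring
  have hlower (D : ι) : ∑ B, ∑ C, 1 / 2 * (metricDeriv h B x D C + metricDeriv h C x D B
        - metricDeriv h D x B C) * v B * v C =
      ∑ B, v B * (metricDeriv h B x *ᵥ v) D - 1 / 2 * (v ⬝ᵥ metricDeriv h D x *ᵥ v) := by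
    rw [dotProduct_mulVec_eq_sum]
    simp only [mul_add, mul_sub, add_mul, sub_mul, mul_assoc (1 / 2 : ℝ), Finset.sum_add_distrib,
      Finset.sum_sub_distrib, ← Finset.mul_sum, hswap, Matrix.mulVec, dotProduct]
    simp only [Finset.mul_sum, ← Finset.sum_add_distrib]
    congr 1
    exact Finset.sum_congr rfl fun B _ => Finset.sum_congr rfl fun C _ => by ring
  rw [← funext hlower]
  ext l
  simp only [Matrix.mulVec, dotProduct, Chr, Finset.mul_sum, Finset.sum_mul]
  rw [Finset.sum_comm_cycle]
  refine Finset.sum_congr rfl fun B _ => Finset.sum_congr rfl fun C _ =>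
    Finset.sum_congr rfl fun D _ => ?_
  simp only [metricDeriv, Matrix.of_apply]
  ring

theorem mulVec_covAccel (hx : IsUnit (h x).det) (v w : ι → ℝ) :
    h x *ᵥ covAccel h x v w = eulerLagrange h x v w := by
  change h x *ᵥ (w + fun l => ∑ B, ∑ C, Chr h l B C x * v B * v C) = _
  rw [sum_Chr_mul_mul, Matrix.mulVec_add, Matrix.mulVec_mulVec, Matrix.mul_nonsing_inv _ hx,
    Matrix.one_mulVec]
  ext D
  simp only [eulerLagrange, Pi.add_apply, add_sub_assoc]

theorem covAccel_congr_of_eventuallyEq {h' : (ι → ℝ) → Matrix ι ι ℝ} (hh : h =ᶠ[𝓝 x] h')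
    (v w : ι → ℝ) : covAccel h x v w = covAccel h' x v w := by
  have hpd (B C D : ι) : pd (fun y => h y B C) D x = pd (fun y => h' y B C) D x :=
    pd_congr_of_eventuallyEq (hh.fun_comp (· B C)) D
  ext l
  simp only [covAccel, Chr, hpd, hh.self_of_nhds]

theorem metricDeriv_smul {Φ : (ι → ℝ) → ℝ} (hΦ : DifferentiableAt ℝ Φ x)
    (hh : ∀ B C, DifferentiableAt ℝ (fun y => h y B C) x) (D : ι) :
    metricDeriv (fun y => Φ y • h y) D x = pd Φ D x • h x + Φ x • metricDeriv h D x := by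
  ext B C
  exact pd_mul hΦ (hh B C) D

theorem pd_dotProduct_mulVec (hh : ∀ B C, DifferentiableAt ℝ (fun y => h y B C) x)
    (v : ι → ℝ) (D : ι) :
    pd (fun y => v ⬝ᵥ h y *ᵥ v) D x = v ⬝ᵥ metricDeriv h D x *ᵥ v := by
  simp only [dotProduct_mulVec_eq_sum]
  have hdiff : DifferentiableAt ℝ (fun y => ∑ B, ∑ C, h y B C * v B * v C) x := by fun_prop
  refine (hasDerivAt_line_pd hdiff D).unique ?_
  exact HasDerivAt.fun_sum fun B _ => HasDerivAt.fun_sum fun C _ =>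
    ((hasDerivAt_line_pd (hh B C) D).mul_const _).mul_const _

theorem hasDerivAt_mulVec_apply {z v : ℝ → ι → ℝ} {w : ι → ℝ} {t : ℝ}
    (hh : ∀ B C, DifferentiableAt ℝ (fun y => h y B C) (z t)) (hz : HasDerivAt z (v t) t)
    (hv : HasDerivAt v w t) (D : ι) :
    HasDerivAt (fun s => (h (z s) *ᵥ v s) D)
      (eulerLagrange h (z t) (v t) w D + 1 / 2 * (v t ⬝ᵥ metricDeriv h D (z t) *ᵥ v t)) t := by
  refine (HasDerivAt.fun_sum fun C (_ : C ∈ Finset.univ) =>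
    (hasDerivAt_comp_curve (hh D C) hz).mul (hasDerivAt_pi.1 hv C)).congr_deriv ?_
  simp only [eulerLagrange, Matrix.mulVec, dotProduct, metricDeriv, Matrix.of_apply,
    smul_eq_mul, Finset.sum_add_distrib, Finset.sum_mul, Finset.mul_sum]
  rw [Finset.sum_comm, add_comm]
  simp only [sub_add_cancel, mul_assoc]

theorem eulerLagrange_smul_reparam {Φ : (ι → ℝ) → ℝ} (hΦ : DifferentiableAt ℝ Φ x)
    (hΦ0 : Φ x ≠ 0) (hh : ∀ B C, DifferentiableAt ℝ (fun y => h y B C) x) (v w : ι → ℝ) (D : ι) :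
    eulerLagrange (fun y => Φ y • h y) x ((Φ x)⁻¹ • v)
        ((Φ x)⁻¹ • ((Φ x)⁻¹ • w + (-(∑ B, v B • pd Φ B x) / Φ x ^ 2) • v)) D =
      (Φ x)⁻¹ * (eulerLagrange h x v w D - (v ⬝ᵥ h x *ᵥ v) / Φ x * (1 / 2 * pd Φ D x)) := by
  simp only [eulerLagrange, metricDeriv_smul hΦ hh, Matrix.mulVec_smul, Matrix.mulVec_add,
    Matrix.add_mulVec, Matrix.smul_mulVec, Pi.smul_apply, Pi.add_apply, smul_eq_mul,
    dotProduct_add, dotProduct_smul, smul_dotProduct, mul_add, Finset.sum_add_distrib]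
  have hgrad : ∑ B, (Φ x)⁻¹ * v B * ((Φ x)⁻¹ * (pd Φ B x * (h x *ᵥ v) D)) =
      (∑ B, v B * pd Φ B x) / Φ x ^ 2 * (h x *ᵥ v) D := by
    rw [Finset.sum_div, Finset.sum_mul]
    exact Finset.sum_congr rfl fun B _ => by field_simp
  have hquad : ∑ B, (Φ x)⁻¹ * v B * ((Φ x)⁻¹ * (Φ x * (metricDeriv h B x *ᵥ v) D)) =
      (Φ x)⁻¹ * ∑ B, v B * (metricDeriv h B x *ᵥ v) D := by
    rw [Finset.mul_sum]
    exact Finset.sum_congr rfl fun B _ => by field_simp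
  rw [hgrad, hquad]
  field_simp
  ring

theorem covAccel_smul_reparam {Φ : (ι → ℝ) → ℝ} (hΦ : DifferentiableAt ℝ Φ x) (hΦ0 : Φ x ≠ 0)
    (hh : ∀ B C, DifferentiableAt ℝ (fun y => h y B C) x) (hdet : IsUnit (h x).det)
    {v w f : ι → ℝ} (henergy : v ⬝ᵥ h x *ᵥ v = Φ x)
    (hEL : ∀ D, eulerLagrange h x v w D = f D + 1 / 2 * pd Φ D x) :
    covAccel (fun y => Φ y • h y) x ((Φ x)⁻¹ • v)
        ((Φ x)⁻¹ • ((Φ x)⁻¹ • w + (-(∑ B, v B • pd Φ B x) / Φ x ^ 2) • v)) =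
      (Φ x • h x)⁻¹ *ᵥ ((Φ x)⁻¹ • f) := by
  have hdet' : IsUnit (Φ x • h x).det := by
    rw [Matrix.det_smul]
    exact (hΦ0.isUnit.pow _).mul hdet
  rw [← Matrix.one_mulVec (covAccel _ _ _ _), ← Matrix.nonsing_inv_mul _ hdet',
    ← Matrix.mulVec_mulVec, mulVec_covAccel (h := fun y => Φ y • h y) hdet']
  congr 1
  ext D
  rw [eulerLagrange_smul_reparam hΦ hΦ0 hh, henergy, hEL, div_self hΦ0, one_mul,
    add_sub_cancel_right, Pi.smul_apply, smul_eq_mul]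

end MetricFields

section Curves

open scoped Matrix Topology

/-- The velocity of a curve in `ℝ^ι`, taken component by component as in `IsGeodesicOn`. -/
noncomputable def velocity {ι : Type*} (z : ℝ → ι → ℝ) (t : ℝ) : ι → ℝ :=
  fun B => deriv (fun s => z s B) t

variable {ι : Type*} {x xr : ℝ → ι → ℝ} {τ : ℝ → ℝ} {t : ℝ}

theorem hasDerivAt_velocity (hx : DifferentiableAt ℝ x t) : HasDerivAt x (velocity x t) t :=
  hasDerivAt_pi.2 fun B => (differentiableAt_pi.1 hx B).hasDerivAt

theorem velocity_reparam {c : ℝ} (hτ : HasStrictDerivAt τ c t) (hc : c ≠ 0)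
    (hxr : xr ∘ τ =ᶠ[𝓝 t] x) (hx : DifferentiableAt ℝ x t) :
    velocity xr (τ t) = c⁻¹ • velocity x t :=
  funext fun B => (hasDerivAt_of_comp_eventuallyEq hτ hc (hxr.fun_comp (· B))
    (hasDerivAt_pi.1 (hasDerivAt_velocity hx) B)).deriv

theorem velocity_velocity_reparam {c : ℝ → ℝ} {c' : ℝ}
    (hτ : ∀ᶠ s in 𝓝 t, HasStrictDerivAt τ (c s) s) (hc : c t ≠ 0) (hc' : HasDerivAt c c' t)
    (hxr : xr ∘ τ =ᶠ[𝓝 t] x) (hx : ∀ᶠ s in 𝓝 t, DifferentiableAt ℝ x s)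
    (hx' : DifferentiableAt ℝ (velocity x) t) :
    velocity (velocity xr) (τ t) =
      (c t)⁻¹ • ((c t)⁻¹ • velocity (velocity x) t + (-c' / c t ^ 2) • velocity x t) := by
  have hvel : velocity xr ∘ τ =ᶠ[𝓝 t] fun s => (c s)⁻¹ • velocity x s := by
    filter_upwards [hτ, hc'.continuousAt.eventually_ne hc, hxr.eventuallyEq_nhds, hx]
      with s hτs hcs hxrs hxs using velocity_reparam hτs hcs hxrs hxs
  exact funext fun B => (hasDerivAt_of_comp_eventuallyEq hτ.self_of_nhds hc (hvel.fun_comp (· B))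
    ((hc'.inv hc).smul (hasDerivAt_pi.1 (hasDerivAt_velocity hx') B))).deriv

end Curves

section Maupertuis

open scoped Matrix Topology

variable {ι : Type*} [Fintype ι] {h : (ι → ℝ) → Matrix ι ι ℝ}
  {Φ : (ι → ℝ) → ℝ} {x xr : ℝ → ι → ℝ} {τ : ℝ → ℝ} {t : ℝ}

theorem dotProduct_smul_mulVec_velocity_reparam (hΦ0 : Φ (x t) ≠ 0)
    (hx : DifferentiableAt ℝ x t) (hτ : HasStrictDerivAt τ (Φ (x t)) t)
    (hxr : xr ∘ τ =ᶠ[𝓝 t] x)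
    (henergy : velocity x t ⬝ᵥ h (x t) *ᵥ velocity x t = Φ (x t)) :
    velocity xr (τ t) ⬝ᵥ (Φ (x t) • h (x t)) *ᵥ velocity xr (τ t) = 1 := by
  rw [velocity_reparam hτ hΦ0 hxr hx]
  simp only [Matrix.mulVec_smul, Matrix.smul_mulVec, dotProduct_smul, smul_dotProduct, henergy,
    smul_eq_mul]
  field_simp

variable [DecidableEq ι]

/-- The Jacobi–Maupertuis principle with a velocity-dependent force `F`. -/
theorem covAccel_smul_velocity_reparam
    (hh : ∀ B C, DifferentiableAt ℝ (fun y => h y B C) (x t)) (hdet : IsUnit (h (x t)).det)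
    (hΦ : DifferentiableAt ℝ Φ (x t)) (hΦ0 : Φ (x t) ≠ 0)
    (hx : ∀ᶠ s in 𝓝 t, DifferentiableAt ℝ x s) (hx' : DifferentiableAt ℝ (velocity x) t)
    (hτ : ∀ᶠ s in 𝓝 t, HasStrictDerivAt τ (Φ (x s)) s) (hxr : xr ∘ τ =ᶠ[𝓝 t] x)
    (henergy : velocity x t ⬝ᵥ h (x t) *ᵥ velocity x t = Φ (x t)) {F : Matrix ι ι ℝ}
    (hEL : ∀ D, eulerLagrange h (x t) (velocity x t) (velocity (velocity x) t) D =
      (F *ᵥ velocity x t) D + 1 / 2 * pd Φ D (x t)) :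
    covAccel (fun y => Φ y • h y) (x t) (velocity xr (τ t)) (velocity (velocity xr) (τ t)) =
      (Φ (x t) • h (x t))⁻¹ *ᵥ F *ᵥ velocity xr (τ t) := by
  have hΦ' := hasDerivAt_comp_curve hΦ (hasDerivAt_velocity hx.self_of_nhds)
  rw [velocity_reparam hτ.self_of_nhds hΦ0 hxr hx.self_of_nhds,
    velocity_velocity_reparam hτ hΦ0 hΦ' hxr hx hx',
    covAccel_smul_reparam hΦ hΦ0 hh hdet henergy hEL, Matrix.mulVec_smul F]

end Maupertuis

section KaluzaKlein

open scoped Matrix Topology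

variable {g : (Fin 4 → ℝ) → Matrix (Fin 4) (Fin 4) ℝ} {A : (Fin 4 → ℝ) → Fin 4 → ℝ}
  {a : (Fin 4 → ℝ) → ℝ} {β ε r : ℝ}

/-- The 1-form `θ = β A_μ dx^μ + dy`, in terms of which the Kaluza–Klein metric is
`g₀ - a² θ ⊗ θ`. -/
def kkForm (A : (Fin 4 → ℝ) → Fin 4 → ℝ) (β : ℝ) (x : Fin 4 → ℝ) : K5 → ℝ :=
  Sum.elim (β • A x) fun _ => 1

/-- The radicand `ε + r² / (β² a²)` of the conformal factor `Omr`, so that `g_r` is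
`kkPotential • g₀` wherever this is nonnegative. -/
noncomputable def kkPotential (a : (Fin 4 → ℝ) → ℝ) (β ε r : ℝ) (x : Fin 4 → ℝ) : ℝ :=
  ε + r ^ 2 / (β ^ 2 * a x ^ 2)

/-- The electromagnetic field `F_{μν}` as a matrix. -/
noncomputable def fieldMatrix (A : (Fin 4 → ℝ) → Fin 4 → ℝ) (x : Fin 4 → ℝ) :
    Matrix (Fin 4) (Fin 4) ℝ :=
  Matrix.of fun μ ν => Fem A μ ν x

theorem differentiable_projx : Differentiable ℝ projx := by
  unfold projx
  fun_prop

theorem kkForm_dotProduct (A : (Fin 4 → ℝ) → Fin 4 → ℝ) (β : ℝ) (x : Fin 4 → ℝ) (v : K5 → ℝ) :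
    kkForm A β x ⬝ᵥ v = v (Sum.inr ()) + β * (A x ⬝ᵥ projx v) := by
  simp [kkForm, dotProduct, projx, Finset.mul_sum, mul_assoc, add_comm]

theorem Qcharge_eq (a : (Fin 4 → ℝ) → ℝ) (A : (Fin 4 → ℝ) → Fin 4 → ℝ) (β : ℝ)
    (z : ℝ → K5 → ℝ) (t : ℝ) :
    Qcharge a A β z t = a (projx (z t)) ^ 2 * (kkForm A β (projx (z t)) ⬝ᵥ velocity z t) := by
  rw [kkForm_dotProduct]
  rfl

theorem KK_eq_fromBlocks_sub (g : (Fin 4 → ℝ) → Matrix (Fin 4) (Fin 4) ℝ)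
    (A : (Fin 4 → ℝ) → Fin 4 → ℝ) (a : (Fin 4 → ℝ) → ℝ) (β : ℝ) (x : Fin 4 → ℝ) :
    KK g A a (fun _ => 1) β x = Matrix.fromBlocks (g x) 0 0 0
      - a x ^ 2 • Matrix.vecMulVec (kkForm A β x) (kkForm A β x) := by
  ext (μ | _) (ν | _) <;>
    simp only [KK, kkForm, Matrix.of_apply, Matrix.sub_apply, Matrix.fromBlocks_apply₁₁,
      Matrix.fromBlocks_apply₁₂, Matrix.fromBlocks_apply₂₁, Matrix.fromBlocks_apply₂₂,
      Matrix.zero_apply, Matrix.smul_apply, Matrix.vecMulVec_apply, Sum.elim_inl, Sum.elim_inr,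
      Pi.smul_apply, smul_eq_mul, one_pow, inv_one, one_mul] <;>
    ring

theorem KK_mulVec (g : (Fin 4 → ℝ) → Matrix (Fin 4) (Fin 4) ℝ)
    (A : (Fin 4 → ℝ) → Fin 4 → ℝ) (a : (Fin 4 → ℝ) → ℝ) (β : ℝ) (x : Fin 4 → ℝ) (v : K5 → ℝ) :
    KK g A a (fun _ => 1) β x *ᵥ v = Sum.elim (g x *ᵥ projx v) 0
      - (a x ^ 2 * (kkForm A β x ⬝ᵥ v)) • kkForm A β x := by
  rw [KK_eq_fromBlocks_sub, Matrix.sub_mulVec, Matrix.smul_mulVec, Matrix.vecMulVec_mulVec,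
    Matrix.fromBlocks_mulVec, op_smul_eq_smul, smul_smul, Matrix.zero_mulVec, Matrix.zero_mulVec,
    Matrix.zero_mulVec, add_zero, add_zero]
  rfl

theorem dotProduct_KK_mulVec (g : (Fin 4 → ℝ) → Matrix (Fin 4) (Fin 4) ℝ)
    (A : (Fin 4 → ℝ) → Fin 4 → ℝ) (a : (Fin 4 → ℝ) → ℝ) (β : ℝ) (x : Fin 4 → ℝ) (v : K5 → ℝ) :
    v ⬝ᵥ KK g A a (fun _ => 1) β x *ᵥ v =
      projx v ⬝ᵥ g x *ᵥ projx v - a x ^ 2 * (kkForm A β x ⬝ᵥ v) ^ 2 := by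
  rw [KK_mulVec, dotProduct_sub, dotProduct_smul, dotProduct_comm v (kkForm A β x), smul_eq_mul,
    mul_assoc, ← sq]
  simp [dotProduct, projx]

theorem isUnit_det_KK {x : Fin 4 → ℝ} (hg : IsUnit (g x).det) (ha : a x ≠ 0) :
    IsUnit (KK g A a (fun _ => 1) β x).det := by
  refine isUnit_iff_ne_zero.2 fun hdet => ?_
  obtain ⟨v, hv, hKKv⟩ := Matrix.exists_mulVec_eq_zero_iff.2 hdet
  rw [KK_mulVec] at hKKv
  have hθ : kkForm A β x ⬝ᵥ v = 0 := by
    simpa [kkForm, ha] using congrFun hKKv (Sum.inr ())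
  have hgv : g x *ᵥ projx v = 0 := by
    ext μ
    simpa [hθ] using congrFun hKKv (Sum.inl μ)
  have hx : projx v = 0 := Matrix.eq_zero_of_mulVec_eq_zero hg.ne_zero hgv
  rw [kkForm_dotProduct, hx, dotProduct_zero, mul_zero, add_zero] at hθ
  exact hv (funext (Sum.rec (congrFun hx) fun _ => hθ))

theorem differentiableAt_KKfield {p : K5 → ℝ}
    (hg : ∀ μ ν, DifferentiableAt ℝ (fun x => g x μ ν) (projx p))
    (hA : ∀ μ, DifferentiableAt ℝ (fun x => A x μ) (projx p))
    (ha : DifferentiableAt ℝ a (projx p)) (B C : K5) :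
    DifferentiableAt ℝ (fun q => KKfield g A a (fun _ => 1) β q B C) p := by
  refine DifferentiableAt.comp (g := fun x => KK g A a (fun _ => 1) β x B C) p ?_
    (differentiable_projx p)
  rcases B with μ | _ <;> rcases C with ν | _ <;> simp only [KK, Matrix.of_apply] <;> fun_prop

theorem pd_comp_projx {f : (Fin 4 → ℝ) → ℝ} {p : K5 → ℝ} (hf : DifferentiableAt ℝ f (projx p))
    (k : Fin 4) : pd (fun q => f (projx q)) (Sum.inl k) p = pd f k (projx p) := by
  have hline (s : ℝ) :
      projx (p + s • Pi.single (Sum.inl k) 1) = projx p + s • Pi.single k 1 := by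
    ext μ
    simp [projx, Pi.single_apply]
  refine (hasDerivAt_line_pd (hf.comp p (differentiable_projx p)) (Sum.inl k)).unique ?_
  simpa only [Function.comp_apply, hline] using hasDerivAt_line_pd hf k

theorem differentiableAt_kkForm_dotProduct {x : Fin 4 → ℝ}
    (hA : ∀ μ, DifferentiableAt ℝ (fun x => A x μ) x) (v : K5 → ℝ) :
    DifferentiableAt ℝ (fun y => kkForm A β y ⬝ᵥ v) x := by
  simp only [kkForm_dotProduct]
  simp only [dotProduct]
  fun_prop

theorem pd_kkForm_dotProduct {x : Fin 4 → ℝ}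
    (hA : ∀ μ, DifferentiableAt ℝ (fun x => A x μ) x) (v : K5 → ℝ) (k : Fin 4) :
    pd (fun y => kkForm A β y ⬝ᵥ v) k x = β * ∑ ν, pd (fun y => A y ν) k x * projx v ν := by
  refine (hasDerivAt_line_pd (differentiableAt_kkForm_dotProduct hA v) k).unique ?_
  simp only [kkForm_dotProduct]
  exact ((HasDerivAt.fun_sum fun ν _ =>
    (hasDerivAt_line_pd (hA ν) k).mul_const _).const_mul β).const_add _

theorem dotProduct_metricDeriv_KKfield_mulVec {p : K5 → ℝ}
    (hg : ∀ μ ν, DifferentiableAt ℝ (fun x => g x μ ν) (projx p))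
    (hA : ∀ μ, DifferentiableAt ℝ (fun x => A x μ) (projx p))
    (ha : DifferentiableAt ℝ a (projx p)) (v : K5 → ℝ) (k : Fin 4) :
    v ⬝ᵥ metricDeriv (KKfield g A a (fun _ => 1) β) (Sum.inl k) p *ᵥ v =
      projx v ⬝ᵥ metricDeriv g k (projx p) *ᵥ projx v
        - 2 * a (projx p) * pd a k (projx p) * (kkForm A β (projx p) ⬝ᵥ v) ^ 2
        - 2 * a (projx p) ^ 2 * (kkForm A β (projx p) ⬝ᵥ v) *
          (β * ∑ ν, pd (fun x => A x ν) k (projx p) * projx v ν) := by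
  have hgv : DifferentiableAt ℝ (fun x => projx v ⬝ᵥ g x *ᵥ projx v) (projx p) := by
    simp only [dotProduct_mulVec_eq_sum]
    fun_prop
  have hθ := differentiableAt_kkForm_dotProduct (β := β) hA v
  have hquad : DifferentiableAt ℝ (fun x => v ⬝ᵥ KK g A a (fun _ => 1) β x *ᵥ v) (projx p) := by
    simp only [dotProduct_KK_mulVec]
    fun_prop
  rw [← pd_dotProduct_mulVec (differentiableAt_KKfield hg hA ha), ← pd_dotProduct_mulVec hg,
    ← pd_kkForm_dotProduct hA]
  refine (pd_comp_projx hquad k).trans ((hasDerivAt_line_pd hquad k).unique ?_)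
  simp only [dotProduct_KK_mulVec]
  refine ((hasDerivAt_line_pd hgv k).sub
    (((hasDerivAt_line_pd ha k).pow 2).mul ((hasDerivAt_line_pd hθ k).pow 2))).congr_deriv ?_
  simp only [Nat.cast_ofNat, zero_smul, add_zero, Nat.add_one_sub_one, pow_one, Pi.pow_apply]
  ring

theorem differentiableAt_kkPotential {x : Fin 4 → ℝ} (hβ : β ≠ 0) (ha : DifferentiableAt ℝ a x)
    (ha0 : a x ≠ 0) : DifferentiableAt ℝ (kkPotential a β ε r) x := by
  have hden : β ^ 2 * a x ^ 2 ≠ 0 := by positivity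
  unfold kkPotential
  fun_prop (disch := assumption)

theorem pd_kkPotential {x : Fin 4 → ℝ} (hβ : β ≠ 0) (ha : DifferentiableAt ℝ a x)
    (ha0 : a x ≠ 0) (k : Fin 4) :
    pd (kkPotential a β ε r) k x = -2 * r ^ 2 / (β ^ 2 * a x ^ 3) * pd a k x := by
  have hden : β ^ 2 * a (x + (0 : ℝ) • Pi.single k 1) ^ 2 ≠ 0 := by
    rw [zero_smul, add_zero]
    positivity
  refine (hasDerivAt_line_pd (differentiableAt_kkPotential hβ ha ha0) k).unique ?_
  refine ((((((hasDerivAt_line_pd ha k).pow 2).const_mul (β ^ 2)).inv hden).const_mul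
    (r ^ 2)).const_add ε).congr_deriv ?_
  simp only [Nat.cast_ofNat, zero_smul, add_zero, Nat.add_one_sub_one, pow_one, Pi.pow_apply]
  field_simp

theorem Omr_sq {x : Fin 4 → ℝ} (hpos : 0 ≤ kkPotential a β ε r x) :
    Omr a β ε r x ^ 2 = kkPotential a β ε r x :=
  Real.sq_sqrt hpos

theorem hasStrictDerivAt_kkPotential {x : ℝ → Fin 4 → ℝ} {τ : ℝ → ℝ} {I : Set ℝ} (hβ : β ≠ 0)
    (ha : Differentiable ℝ a) (ha0 : ∀ x, a x ≠ 0) (hI : IsOpen I) (hx : ContinuousOn x I)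
    (hpos : ∀ t ∈ I, 0 ≤ kkPotential a β ε r (x t))
    (hτ : ∀ t ∈ I, HasDerivAt τ (Omr a β ε r (x t) ^ 2) t) {t : ℝ} (ht : t ∈ I) :
    HasStrictDerivAt τ (kkPotential a β ε r (x t)) t := by
  have hτΦ : ∀ s ∈ I, HasDerivAt τ (kkPotential a β ε r (x s)) s := fun s hs =>
    Omr_sq (hpos s hs) ▸ hτ s hs
  have hΦ : ContinuousAt (kkPotential a β ε r) (x t) :=
    (differentiableAt_kkPotential hβ (ha _) (ha0 _)).continuousAt
  exact hasStrictDerivAt_of_hasDerivAt_of_continuousAt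
    (Filter.eventually_of_mem (hI.mem_nhds ht) hτΦ)
    (hΦ.comp (hx.continuousAt (hI.mem_nhds ht)))

theorem grmet_eventuallyEq {x : Fin 4 → ℝ} (hβ : β ≠ 0) (ha : DifferentiableAt ℝ a x)
    (ha0 : a x ≠ 0) (hpos : 0 < kkPotential a β ε r x) :
    grmet g a β ε r =ᶠ[𝓝 x] fun y => kkPotential a β ε r y • g y := by
  filter_upwards [(differentiableAt_kkPotential hβ ha ha0).continuousAt.eventually_const_lt hpos]
    with y hy
  rw [grmet, Omr_sq hy.le]

theorem dotProduct_mulVec_projx_velocity {z : ℝ → K5 → ℝ} {t : ℝ} (hβ : β ≠ 0)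
    (hr : r = -β * Qcharge a A β z t)
    (hnorm : velocity z t ⬝ᵥ KKfield g A a (fun _ => 1) β (z t) *ᵥ velocity z t = ε) :
    projx (velocity z t) ⬝ᵥ g (projx (z t)) *ᵥ projx (velocity z t) =
      kkPotential a β ε r (projx (z t)) := by
  rw [KKfield, dotProduct_KK_mulVec] at hnorm
  rw [Qcharge_eq] at hr
  rw [kkPotential, hr, ← hnorm]
  field_simp
  ring

theorem hasDerivAt_KKfield_mulVec_inl {z : ℝ → K5 → ℝ} {t : ℝ}
    (hg : ∀ μ ν, DifferentiableAt ℝ (fun x => g x μ ν) (projx (z t)))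
    (hA : ∀ μ, DifferentiableAt ℝ (fun x => A x μ) (projx (z t)))
    (hz : DifferentiableAt ℝ z t) (hz' : DifferentiableAt ℝ (velocity z) t)
    (hr : ∀ᶠ s in 𝓝 t, r = -β * Qcharge a A β z s) (k : Fin 4) :
    HasDerivAt (fun s => (KKfield g A a (fun _ => 1) β (z s) *ᵥ velocity z s) (Sum.inl k))
      (eulerLagrange g (projx (z t)) (projx (velocity z t)) (projx (velocity (velocity z) t)) k
        + 1 / 2 * (projx (velocity z t) ⬝ᵥ
          metricDeriv g k (projx (z t)) *ᵥ projx (velocity z t))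
        + r * ∑ ν, pd (fun x => A x k) ν (projx (z t)) * projx (velocity z t) ν) t := by
  have hx : HasDerivAt (fun s => projx (z s)) (projx (velocity z t)) t :=
    hasDerivAt_pi.2 fun μ => hasDerivAt_pi.1 (hasDerivAt_velocity hz) (Sum.inl μ)
  have hx' : HasDerivAt (fun s => projx (velocity z s)) (projx (velocity (velocity z) t)) t :=
    hasDerivAt_pi.2 fun μ => hasDerivAt_pi.1 (hasDerivAt_velocity hz') (Sum.inl μ)
  have hp := (hasDerivAt_mulVec_apply hg hx hx' k).add
    ((hasDerivAt_comp_curve (hA k) hx).const_mul r)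
  simp only [smul_eq_mul, mul_comm (projx (velocity z t) _)] at hp
  refine hp.congr_of_eventuallyEq ?_
  filter_upwards [hr] with s hs
  rw [Qcharge_eq] at hs
  simp only [KKfield, KK_mulVec, hs, kkForm, Pi.add_apply, Pi.sub_apply, Pi.smul_apply,
    Sum.elim_inl, smul_eq_mul]
  ring

theorem eulerLagrange_projx_of_geodesic {z : ℝ → K5 → ℝ} {t : ℝ} (hβ : β ≠ 0)
    (hg : ∀ μ ν, DifferentiableAt ℝ (fun x => g x μ ν) (projx (z t)))
    (hdet : IsUnit (g (projx (z t))).det)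
    (hA : ∀ μ, DifferentiableAt ℝ (fun x => A x μ) (projx (z t)))
    (ha : DifferentiableAt ℝ a (projx (z t))) (ha0 : a (projx (z t)) ≠ 0)
    (hz : DifferentiableAt ℝ z t) (hz' : DifferentiableAt ℝ (velocity z) t)
    (hr : ∀ᶠ s in 𝓝 t, r = -β * Qcharge a A β z s)
    (hgeo : covAccel (KKfield g A a (fun _ => 1) β) (z t) (velocity z t)
      (velocity (velocity z) t) = 0) (k : Fin 4) :
    eulerLagrange g (projx (z t)) (projx (velocity z t)) (projx (velocity (velocity z) t)) k =
      ((r • fieldMatrix A (projx (z t))) *ᵥ projx (velocity z t)) k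
        + 1 / 2 * pd (kkPotential a β ε r) k (projx (z t)) := by
  have hKK : eulerLagrange (KKfield g A a (fun _ => 1) β) (z t) (velocity z t)
      (velocity (velocity z) t) (Sum.inl k) = 0 := by
    rw [← mulVec_covAccel (isUnit_det_KK hdet ha0), hgeo, Matrix.mulVec_zero, Pi.zero_apply]
  have hmomentum := (hasDerivAt_mulVec_apply (differentiableAt_KKfield hg hA ha)
    (hasDerivAt_velocity hz) (hasDerivAt_velocity hz') (Sum.inl k)).unique
      (hasDerivAt_KKfield_mulVec_inl hg hA hz hz' hr k)
  rw [hKK, dotProduct_metricDeriv_KKfield_mulVec hg hA ha] at hmomentum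
  have hforce : ((r • fieldMatrix A (projx (z t))) *ᵥ projx (velocity z t)) k =
      r * ∑ ν, pd (fun x => A x ν) k (projx (z t)) * projx (velocity z t) ν
        - r * ∑ ν, pd (fun x => A x k) ν (projx (z t)) * projx (velocity z t) ν := by
    rw [Matrix.smul_mulVec, Pi.smul_apply, smul_eq_mul, ← mul_sub, ← Finset.sum_sub_distrib]
    simp only [Matrix.mulVec, dotProduct, fieldMatrix, Matrix.of_apply, Fem, sub_mul]
  have hrt := hr.self_of_nhds
  rw [Qcharge_eq] at hrt
  have hpot : 1 / 2 * pd (kkPotential a β ε r) k (projx (z t)) = -(a (projx (z t)) *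
      pd a k (projx (z t)) * (kkForm A β (projx (z t)) ⬝ᵥ velocity z t) ^ 2) := by
    rw [pd_kkPotential hβ ha ha0, hrt]
    field_simp
  rw [hforce, hpot]
  linear_combination -hmomentum -
    (∑ ν, pd (fun x => A x ν) k (projx (z t)) * projx (velocity z t) ν) * hrt

theorem covAccel_grmet_velocity_reparam {z : ℝ → K5 → ℝ} {τ : ℝ → ℝ} {xr : ℝ → Fin 4 → ℝ}
    {t : ℝ} (hβ : β ≠ 0) (hg : ∀ μ ν, DifferentiableAt ℝ (fun x => g x μ ν) (projx (z t)))
    (hdet : IsUnit (g (projx (z t))).det)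
    (hA : ∀ μ, DifferentiableAt ℝ (fun x => A x μ) (projx (z t)))
    (ha : DifferentiableAt ℝ a (projx (z t))) (ha0 : a (projx (z t)) ≠ 0)
    (hz : ∀ᶠ s in 𝓝 t, DifferentiableAt ℝ z s) (hz' : DifferentiableAt ℝ (velocity z) t)
    (hgeo : covAccel (KKfield g A a (fun _ => 1) β) (z t) (velocity z t)
      (velocity (velocity z) t) = 0)
    (hnorm : velocity z t ⬝ᵥ KKfield g A a (fun _ => 1) β (z t) *ᵥ velocity z t = ε)
    (hr : ∀ᶠ s in 𝓝 t, r = -β * Qcharge a A β z s)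
    (hpos : 0 < kkPotential a β ε r (projx (z t)))
    (hτ : ∀ᶠ s in 𝓝 t, HasStrictDerivAt τ (kkPotential a β ε r (projx (z s))) s)
    (hxr : ∀ᶠ s in 𝓝 t, xr (τ s) = projx (z s)) :
    covAccel (grmet g a β ε r) (xr (τ t)) (velocity xr (τ t)) (velocity (velocity xr) (τ t)) =
        r • (grmet g a β ε r (xr (τ t)))⁻¹ *ᵥ fieldMatrix A (xr (τ t)) *ᵥ velocity xr (τ t) ∧
      velocity xr (τ t) ⬝ᵥ grmet g a β ε r (xr (τ t)) *ᵥ velocity xr (τ t) = 1 := by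
  have hx : ∀ᶠ s in 𝓝 t, DifferentiableAt ℝ (fun s => projx (z s)) s :=
    hz.mono fun s hs => differentiableAt_pi.2 fun μ => differentiableAt_pi.1 hs (Sum.inl μ)
  have hx' : DifferentiableAt ℝ (velocity fun s => projx (z s)) t :=
    differentiableAt_pi.2 fun μ => differentiableAt_pi.1 hz' (Sum.inl μ)
  have henergy := dotProduct_mulVec_projx_velocity hβ hr.self_of_nhds hnorm
  have hEL := eulerLagrange_projx_of_geodesic (ε := ε) hβ hg hdet hA ha ha0 hz.self_of_nhds hz'
    hr hgeo
  have hgr := grmet_eventuallyEq (g := g) hβ ha ha0 hpos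
  rw [hxr.self_of_nhds, covAccel_congr_of_eventuallyEq hgr, hgr.self_of_nhds,
    ← Matrix.mulVec_smul, ← Matrix.smul_mulVec]
  exact ⟨covAccel_smul_velocity_reparam hg hdet (differentiableAt_kkPotential hβ ha ha0) hpos.ne'
      hx hx' hτ hxr henergy hEL,
    dotProduct_smul_mulVec_velocity_reparam hpos.ne' hx.self_of_nhds hτ.self_of_nhds hxr henergy⟩

end KaluzaKlein

theorem kk_geodesic_projects_to_lorentz_force_general
    (g₀ : (Fin 4 → ℝ) → Matrix (Fin 4) (Fin 4) ℝ) (A : (Fin 4 → ℝ) → Fin 4 → ℝ)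
    (a : (Fin 4 → ℝ) → ℝ) (β : ℝ) (hg : ∀ μ ν, Differentiable ℝ (fun x => g₀ x μ ν))
    (hginv : ∀ x, IsUnit (g₀ x).det) (hA : ∀ μ, Differentiable ℝ (fun x => A x μ))
    (ha : Differentiable ℝ a) (ha0 : ∀ x, a x ≠ 0) (hβ : β ≠ 0) (ε : ℝ)
    (I : Set ℝ) (hI : IsOpen I) (z : ℝ → K5 → ℝ)
    (hz : ∀ B : K5, ContDiffOn ℝ 2 (fun t => z t B) I)
    (hgeo : IsGeodesicOn (KKfield g₀ A a (fun _ => 1) β) z I)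
    (hnorm : ∀ t ∈ I, ∑ B : K5, ∑ C : K5,
      KKfield g₀ A a (fun _ => 1) β (z t) B C
        * deriv (fun u => z u B) t * deriv (fun u => z u C) t = ε)
    (r : ℝ) (hr : ∀ t ∈ I, r = -β * Qcharge a A β z t)
    (hpos : ∀ t ∈ I, 0 < ε + r^2 / (β^2 * (a (projx (z t)))^2))
    (τ : ℝ → ℝ) (hτ : ∀ t ∈ I, HasDerivAt τ ((Omr a β ε r (projx (z t)))^2) t)
    (xr : ℝ → Fin 4 → ℝ) (hxr : ∀ t ∈ I, ∀ μ : Fin 4, xr (τ t) μ = z t (Sum.inl μ)) :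
    ∀ t ∈ I,
      (∀ l : Fin 4,
        deriv (fun s => deriv (fun u => xr u l) s) (τ t)
          + ∑ μ : Fin 4, ∑ ν : Fin 4, Chr (grmet g₀ a β ε r) l μ ν (xr (τ t))
              * deriv (fun u => xr u μ) (τ t) * deriv (fun u => xr u ν) (τ t)
        = r * ∑ α : Fin 4, (grmet g₀ a β ε r (xr (τ t)))⁻¹ l α
              * ∑ ν : Fin 4, Fem A α ν (xr (τ t)) * deriv (fun u => xr u ν) (τ t)) ∧
      (∑ μ : Fin 4, ∑ ν : Fin 4, grmet g₀ a β ε r (xr (τ t)) μ ν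
          * deriv (fun u => xr u μ) (τ t) * deriv (fun u => xr u ν) (τ t) = 1) := by
  intro t ht
  have hnhds : I ∈ nhds t := hI.mem_nhds ht
  have hz1 : DifferentiableOn ℝ z I :=
    differentiableOn_pi.2 fun B => (hz B).differentiableOn two_ne_zero
  have hz2 : DifferentiableOn ℝ (velocity z) I := differentiableOn_pi.2 fun B =>
    ((hz B).deriv_of_isOpen (m := 1) hI (by norm_num)).differentiableOn one_ne_zero
  have hx : ContinuousOn (fun s => projx (z s)) I :=
    continuousOn_pi.2 fun μ => (hz (Sum.inl μ)).continuousOn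
  obtain ⟨hlorentz, hunit⟩ := covAccel_grmet_velocity_reparam (g := g₀) hβ (fun μ ν => hg μ ν _)
    (hginv _) (fun μ => hA μ _) (ha _) (ha0 _)
    (Filter.eventually_of_mem hnhds fun s hs => hz1.differentiableAt (hI.mem_nhds hs))
    (hz2.differentiableAt hnhds) (funext (hgeo t ht))
    ((dotProduct_mulVec_eq_sum _ _).trans (hnorm t ht)) (Filter.eventually_of_mem hnhds hr)
    (hpos t ht)
    (Filter.eventually_of_mem hnhds fun s =>
      hasStrictDerivAt_kkPotential hβ ha ha0 hI hx (fun s hs => (hpos s hs).le) hτ)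
    (Filter.eventually_of_mem hnhds fun s hs => funext (hxr s hs))
  exact ⟨congrFun hlorentz, (dotProduct_mulVec_eq_sum _ _).symm.trans hunit⟩

/-- Theorem 1, main part: the projection of a geodesic of the Kaluza–Klein
metric, reparametrized by `τ` with `dτ/dt = Ω_r(x(t))²`, satisfies the Lorentz force
equation for the metric `g_r = Ω_r² g₀` with the normalization `g_r(xr', xr') = 1`. -/
theorem kk_geodesic_projects_to_lorentz_force
    (g₀ : (Fin 4 → ℝ) → Matrix (Fin 4) (Fin 4) ℝ)
    (A : (Fin 4 → ℝ) → Fin 4 → ℝ) (a : (Fin 4 → ℝ) → ℝ) (β : ℝ)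
    (hg : ∀ μ ν, ContDiff ℝ (⊤ : ℕ∞) (fun x => g₀ x μ ν))
    (hgsymm : ∀ x, (g₀ x).IsSymm)
    (hginv : ∀ x, IsUnit (g₀ x).det)
    (hA : ∀ μ, ContDiff ℝ (⊤ : ℕ∞) (fun x => A x μ))
    (ha : ContDiff ℝ (⊤ : ℕ∞) a) (hapos : ∀ x, 0 < a x)
    (hβ : β ≠ 0)
    (ε : ℝ) (hε : ε = -1 ∨ ε = 0 ∨ ε = 1)
    (I : Set ℝ) (hI : IsOpen I) (hIconn : I.OrdConnected)
    (z : ℝ → K5 → ℝ)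
    (hz : ∀ B : K5, ContDiffOn ℝ (⊤ : ℕ∞) (fun t => z t B) I)
    -- z is a geodesic of the Kaluza–Klein metric g̃ (with Ω ≡ 1)
    (hgeo : IsGeodesicOn (KKfield g₀ A a (fun _ => 1) β) z I)
    -- normalization g̃(ż, ż) = ε
    (hnorm : ∀ t ∈ I, ∑ B : K5, ∑ C : K5,
      KKfield g₀ A a (fun _ => 1) β (z t) B C
        * deriv (fun u => z u B) t * deriv (fun u => z u C) t = ε)
    -- r is the conserved charge r = −β a² (ẏ + β A_μ ẋ^μ)
    (r : ℝ) (hr : ∀ t ∈ I, r = -β * Qcharge a A β z t)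
    -- positivity of ε + r²/(β²a²) along the projected curve
    (hpos : ∀ t ∈ I, 0 < ε + r^2 / (β^2 * (a (projx (z t)))^2))
    -- τ is the reparametrization with dτ/dt = Ω_r(x(t))²
    (τ : ℝ → ℝ) (hτ : ∀ t ∈ I, HasDerivAt τ ((Omr a β ε r (projx (z t)))^2) t)
    -- xr is the projected curve reparametrized by τ
    (xr : ℝ → Fin 4 → ℝ) (hxr : ∀ t ∈ I, ∀ μ : Fin 4, xr (τ t) μ = z t (Sum.inl μ)) :
    ∀ t ∈ I,
      (∀ l : Fin 4,
        deriv (fun s => deriv (fun u => xr u l) s) (τ t)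
          + ∑ μ : Fin 4, ∑ ν : Fin 4, Chr (grmet g₀ a β ε r) l μ ν (xr (τ t))
              * deriv (fun u => xr u μ) (τ t) * deriv (fun u => xr u ν) (τ t)
        = r * ∑ α : Fin 4, (grmet g₀ a β ε r (xr (τ t)))⁻¹ l α
              * ∑ ν : Fin 4, Fem A α ν (xr (τ t)) * deriv (fun u => xr u ν) (τ t)) ∧
      (∑ μ : Fin 4, ∑ ν : Fin 4, grmet g₀ a β ε r (xr (τ t)) μ ν
          * deriv (fun u => xr u μ) (τ t) * deriv (fun u => xr u ν) (τ t) = 1) := by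
  exact kk_geodesic_projects_to_lorentz_force_general g₀ A a β
    (fun μ ν => (hg μ ν).differentiable (by simp)) hginv
    (fun μ => (hA μ).differentiable (by simp)) (ha.differentiable (by simp))
    (fun x => (hapos x).ne') hβ ε I hI z (fun B => (hz B).of_le (by norm_cast)) hgeo hnorm r hr
    hpos τ hτ xr hxr
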